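/- Let G~ be a mixed bicyclic graph whose underlying graph is ∞(p,1,q) with p even and q odd. Then r(G~) = 2m(G) − 2κ(G) if and only if the odd cycle of G~ has odd signature and the even cycle C~_p of G~ satisfies σ(C~_p) ≡ p (mod 4). -/

import Mathlib

open scoped Classical

namespace MixedPaper

universe u

/-- A mixed graph: a finite simple graph together with an orientation of a subset
of its edges.  `arc u v = true` means there is an arc from `u` to `v`. -/
structure MixedGraph (V : Type u) where
  graph : SimpleGraph V
  arc : V → V → Bool
  arc_adj : ∀ u v, arc u v → graph.Adj u v
  arc_antisymm : ∀ u v, arc u v → ¬ arc v u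

variable {V : Type u}

/-- The Hermitian adjacency matrix of a mixed graph. -/
noncomputable def MixedGraph.hMatrix [Fintype V] [DecidableEq V] (M : MixedGraph V) :
    Matrix V V ℂ := fun u v =>
  if M.arc u v then Complex.I
  else if M.arc v u then -Complex.I
  else if M.graph.Adj u v then 1 else 0

/-- The H-rank of a mixed graph: the rank of its Hermitian adjacency matrix. -/
noncomputable def MixedGraph.hRank [Fintype V] [DecidableEq V] (M : MixedGraph V) : ℕ :=
  M.hMatrix.rank

/-- The matching number of a simple graph. -/
noncomputable def matchingNumber (G : SimpleGraph V) : ℕ :=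
  sSup {k | ∃ N : G.Subgraph, N.IsMatching ∧ N.edgeSet.ncard = k}

/-- A subgraph is a cycle subgraph if it is connected and every one of its vertices
has exactly two neighbours in it. -/
def IsCycleSubgraph {G : SimpleGraph V} (C : G.Subgraph) : Prop :=
  C.Connected ∧ ∀ v ∈ C.verts, {w | C.Adj v w}.ncard = 2

/-- κ(G) : the number of even cycles of G. -/
noncomputable def evenCycleCount (G : SimpleGraph V) : ℕ :=
  {C : G.Subgraph | IsCycleSubgraph C ∧ Even C.verts.ncard}.ncard

/-- c(G) = |E(G)| - |V(G)| + ω(G), the cyclomatic number. -/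
noncomputable def cyclomatic [Fintype V] (G : SimpleGraph V) : ℤ :=
  (G.edgeSet.ncard : ℤ) - (Fintype.card V : ℤ) + (Nat.card G.ConnectedComponent : ℤ)

/-- The induced mixed subgraph on a set of vertices. -/
def MixedGraph.induce (M : MixedGraph V) (S : Set V) : MixedGraph S where
  graph := M.graph.induce S
  arc := fun a b => M.arc a.1 b.1
  arc_adj := fun a b h => M.arc_adj a.1 b.1 h
  arc_antisymm := fun a b h => M.arc_antisymm a.1 b.1 h

/-- The mixed subgraph induced by a connected component of the underlying graph. -/
def MixedGraph.comp (M : MixedGraph V) (c : M.graph.ConnectedComponent) :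
    MixedGraph c.supp := M.induce c.supp

/-- The signature |f - b| of a closed walk in a mixed graph: the absolute difference
between the numbers of forward and backward arcs along the walk. -/
def walkSignature (M : MixedGraph V) {u : V} (w : M.graph.Walk u u) : ℕ :=
  ((w.darts.countP fun d => M.arc d.toProd.1 d.toProd.2 : ℤ) -
    (w.darts.countP fun d => M.arc d.toProd.2 d.toProd.1 : ℤ)).natAbs

/-- The signature of the cycle subgraph `C` of the mixed graph `M` satisfies the
predicate `P` (expressed via a closed walk traversing `C`; the signature does not
depend on the choice of traversal). -/
def CycleSig (M : MixedGraph V) (C : M.graph.Subgraph) (P : ℕ → Prop) : Prop :=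
  ∃ (u : V) (w : M.graph.Walk u u), w.IsCycle ∧
    {v | v ∈ w.support} = C.verts ∧ {e | e ∈ w.edges} = C.edgeSet ∧
    P (walkSignature M w)

/-- `C` is a pendant cycle with unique vertex `x` of degree 3. -/
def IsPendantCycle (G : SimpleGraph V) (C : G.Subgraph) (x : V) : Prop :=
  IsCycleSubgraph C ∧ x ∈ C.verts ∧ {w | G.Adj x w}.ncard = 3 ∧
    ∀ v ∈ C.verts, v ≠ x → {w | G.Adj v w}.ncard = 2

/-- G has no pendant vertices (vertices of degree 1). -/
def NoPendantVerts (G : SimpleGraph V) : Prop := ∀ u : V, {w | G.Adj u w}.ncard ≠ 1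

/-- The (distinct) cycles of G are pairwise vertex-disjoint. -/
def CyclesVertexDisjoint (G : SimpleGraph V) : Prop :=
  ∀ C₁ C₂ : G.Subgraph, IsCycleSubgraph C₁ → IsCycleSubgraph C₂ → C₁ ≠ C₂ →
    Disjoint C₁.verts C₂.verts

/-- The (distinct) even cycles of G are pairwise vertex-disjoint. -/
def EvenCyclesVertexDisjoint (G : SimpleGraph V) : Prop :=
  ∀ C₁ C₂ : G.Subgraph, IsCycleSubgraph C₁ → IsCycleSubgraph C₂ →
    Even C₁.verts.ncard → Even C₂.verts.ncard → C₁ ≠ C₂ →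
    Disjoint C₁.verts C₂.verts

/-- One pendant `K₂` deletion step, recorded on the surviving vertex sets:
`u` is pendant in the graph induced on `S` with unique neighbour `v` there,
and both are deleted. -/
def PendantStep (G : SimpleGraph V) (S T : Set V) : Prop :=
  ∃ u v, u ∈ S ∧ v ∈ S ∧ {w | w ∈ S ∧ G.Adj u w} = {v} ∧ T = S \ {u, v}

/-- `S` is reachable from the full vertex set by a sequence of pendant K₂ deletions. -/
def PendantReaches (G : SimpleGraph V) (S : Set V) : Prop :=
  Relation.ReflTransGen (PendantStep G) Set.univ S

/-- The graph induced on `S` has no pendant vertices. -/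
def NoPendantIn (G : SimpleGraph V) (S : Set V) : Prop :=
  ∀ u ∈ S, {w | w ∈ S ∧ G.Adj u w}.ncard ≠ 1

/-- `u` lies on some even cycle of `G`. -/
def OnEvenCycle (G : SimpleGraph V) (u : V) : Prop :=
  ∃ C : G.Subgraph, IsCycleSubgraph C ∧ Even C.verts.ncard ∧ u ∈ C.verts

/-- G is the graph ∞(p,1,q): two cycles of lengths p and q sharing exactly one vertex. -/
def IsInfinityGraph (G : SimpleGraph V) (p q : ℕ) : Prop :=
  ∃ C₁ C₂ : G.Subgraph, IsCycleSubgraph C₁ ∧ IsCycleSubgraph C₂ ∧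
    C₁.verts.ncard = p ∧ C₂.verts.ncard = q ∧
    (C₁.verts ∩ C₂.verts).ncard = 1 ∧ C₁ ⊔ C₂ = ⊤

/-- G is the theta graph θ(p,l,q): three internally disjoint paths with p, l, q
vertices respectively, joining two common endvertices. -/
def IsThetaGraph (G : SimpleGraph V) (p l q : ℕ) : Prop :=
  2 ≤ p ∧ 2 ≤ l ∧ 2 ≤ q ∧ ¬(p = 2 ∧ l = 2) ∧ ¬(p = 2 ∧ q = 2) ∧ ¬(l = 2 ∧ q = 2) ∧
  ∃ (a b : V) (W₁ W₂ W₃ : G.Walk a b), W₁.IsPath ∧ W₂.IsPath ∧ W₃.IsPath ∧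
    W₁.length = p - 1 ∧ W₂.length = l - 1 ∧ W₃.length = q - 1 ∧
    (∀ v : V, v ∈ W₁.support ∨ v ∈ W₂.support ∨ v ∈ W₃.support) ∧
    (∀ e ∈ G.edgeSet, e ∈ W₁.edges ∨ e ∈ W₂.edges ∨ e ∈ W₃.edges) ∧
    {v | v ∈ W₁.support ∧ v ∈ W₂.support} = {a, b} ∧
    {v | v ∈ W₁.support ∧ v ∈ W₃.support} = {a, b} ∧
    {v | v ∈ W₂.support ∧ v ∈ W₃.support} = {a, b}

/-- Every odd cycle of `M` has signature satisfying `P`. -/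
def OddCyclesSig (M : MixedGraph V) (P : ℕ → Prop) : Prop :=
  ∀ C : M.graph.Subgraph, IsCycleSubgraph C → Odd C.verts.ncard → CycleSig M C P

/-- Every even cycle of `M`, of length `n`, has signature `s` satisfying `P n s`. -/
def EvenCyclesSig (M : MixedGraph V) (P : ℕ → ℕ → Prop) : Prop :=
  ∀ C : M.graph.Subgraph, IsCycleSubgraph C → Even C.verts.ncard →
    CycleSig M C (P C.verts.ncard)

/-- The whole mixed graph is a single cycle. -/
def IsCycleMG (M : MixedGraph V) : Prop := IsCycleSubgraph (⊤ : M.graph.Subgraph)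

/-- The family 𝔊₀. -/
def MemG0 [Fintype V] [DecidableEq V] (M : MixedGraph V) : Prop :=
  M.graph.Connected ∧ 1 ≤ cyclomatic M.graph ∧ CyclesVertexDisjoint M.graph ∧
  NoPendantVerts M.graph ∧
  ∃ (C : M.graph.Subgraph) (x : V), IsPendantCycle M.graph C x ∧ Odd C.verts.ncard ∧
    CycleSig M C Odd ∧
    ((M.induce (C.vertsᶜ ∪ {x})).hRank : ℤ) =
      2 * (matchingNumber (M.induce (C.vertsᶜ ∪ {x})).graph : ℤ) -
        2 * cyclomatic (M.induce (C.vertsᶜ ∪ {x})).graph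

/-- The family 𝔛₁ : mixed ∞(p,1,q)-graphs, p even, q odd, whose odd cycle has odd
signature and whose even cycle C̃_p satisfies σ ≡ p (mod 4). -/
def MemX1 (M : MixedGraph V) : Prop :=
  ∃ p q : ℕ, Even p ∧ Odd q ∧ IsInfinityGraph M.graph p q ∧
    OddCyclesSig M Odd ∧ EvenCyclesSig M (fun n s => s % 4 = n % 4)

/-- The family 𝔛₂ : mixed θ(p,l,q)-graphs, p even, l q odd, whose two odd cycles have odd
signatures and whose even cycle C̃_{q+l-2} satisfies q + l + σ ≡ 2 (mod 4). -/
def MemX2 (M : MixedGraph V) : Prop :=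
  ∃ p l q : ℕ, Even p ∧ Odd l ∧ Odd q ∧ IsThetaGraph M.graph p l q ∧
    OddCyclesSig M Odd ∧ EvenCyclesSig M (fun _ s => (q + l + s) % 4 = 2)

/-- The family 𝔊₂ = 𝔊₀ ∪ 𝔛₁ ∪ 𝔛₂ together with the mixed odd cycles of odd signature. -/
def MemG2 [Fintype V] [DecidableEq V] (M : MixedGraph V) : Prop :=
  MemG0 M ∨ MemX1 M ∨ MemX2 M ∨
    (IsCycleMG M ∧ Odd (Nat.card V) ∧ CycleSig M ⊤ Odd)

/-- The family 𝔜₁. -/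
def MemY1 (M : MixedGraph V) : Prop :=
  ∃ p q : ℕ, Even p ∧ Odd q ∧ IsInfinityGraph M.graph p q ∧
    OddCyclesSig M Even ∧ EvenCyclesSig M (fun n s => s % 4 = n % 4)

/-- The family 𝔜₂. -/
def MemY2 (M : MixedGraph V) : Prop :=
  ∃ p l q : ℕ, Even p ∧ Odd l ∧ Odd q ∧ IsThetaGraph M.graph p l q ∧
    OddCyclesSig M Even ∧ EvenCyclesSig M (fun _ s => (q + l + s) % 4 = 2)

/-- `M` is a disjoint union of `k` even cycles and one odd cycle with even signature. -/
def IsDisjointUnionEvenCyclesOddCycleEvenSig (M : MixedGraph V) (k : ℤ) : Prop :=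
  (∀ c : M.graph.ConnectedComponent, IsCycleMG (M.comp c)) ∧
  (({c : M.graph.ConnectedComponent | Even (Nat.card c.supp)}.ncard : ℤ) = k) ∧
  (∃! c : M.graph.ConnectedComponent, Odd (Nat.card c.supp)) ∧
  (∀ c : M.graph.ConnectedComponent, Odd (Nat.card c.supp) →
    CycleSig (M.comp c) ⊤ Even)

/-- The family 𝔉₀. -/
def MemF0 [Fintype V] [DecidableEq V] (M : MixedGraph V) : Prop :=
  M.graph.Connected ∧ 2 ≤ cyclomatic M.graph ∧ CyclesVertexDisjoint M.graph ∧
  NoPendantVerts M.graph ∧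
  (∃ (C₀ : M.graph.Subgraph) (x₀ : V), IsPendantCycle M.graph C₀ x₀ ∧ Odd C₀.verts.ncard ∧
    CycleSig M C₀ Even ∧
    ∀ C : M.graph.Subgraph, IsCycleSubgraph C → C ≠ C₀ →
      Even C.verts.ncard ∧ CycleSig M C (fun s => s % 4 = C.verts.ncard % 4)) ∧
  (∃ (Cq : M.graph.Subgraph) (x : V), IsPendantCycle M.graph Cq x ∧ Even Cq.verts.ncard ∧
    ∃ S : Set ↥(Cq.vertsᶜ ∪ {x}),
      PendantReaches (M.induce (Cq.vertsᶜ ∪ {x})).graph S ∧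
      NoPendantIn (M.induce (Cq.vertsᶜ ∪ {x})).graph S ∧
      IsDisjointUnionEvenCyclesOddCycleEvenSig
        ((M.induce (Cq.vertsᶜ ∪ {x})).induce S)
        (cyclomatic (M.induce (Cq.vertsᶜ ∪ {x})).graph))

/-- The family 𝔉₂ = 𝔉₀ ∪ 𝔜₁ ∪ 𝔜₂ together with the mixed odd cycles of even signature. -/
def MemF2 [Fintype V] [DecidableEq V] (M : MixedGraph V) : Prop :=
  MemF0 M ∨ MemY1 M ∨ MemY2 M ∨
    (IsCycleMG M ∧ Odd (Nat.card V) ∧ CycleSig M ⊤ Even)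

/-- A connected component that is either an even cycle C̃_q with σ ≡ q (mod 4),
or an isolated vertex. -/
def GoodOtherComp (M : MixedGraph V) : Prop :=
  (IsCycleMG M ∧ Even (Nat.card V) ∧
    CycleSig M ⊤ (fun s => s % 4 = (Nat.card V) % 4)) ∨
  Nat.card V = 1

/-- A fractional matching of `G`, given as a weight function on `Sym2 V` vanishing
outside the edge set. -/
def IsFracMatching [Fintype V] [DecidableEq V] (G : SimpleGraph V) (f : Sym2 V → ℝ) : Prop :=
  (∀ e ∈ G.edgeSet, 0 ≤ f e ∧ f e ≤ 1) ∧ (∀ e, e ∉ G.edgeSet → f e = 0) ∧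
    ∀ v : V, ∑ e ∈ Finset.univ.filter (fun e : Sym2 V => v ∈ e), f e ≤ 1

/-- The fractional matching number m*(G). -/
noncomputable def fracMatchingNumber [Fintype V] [DecidableEq V] (G : SimpleGraph V) : ℝ :=
  sSup {x : ℝ | ∃ f : Sym2 V → ℝ, IsFracMatching G f ∧ ∑ e : Sym2 V, f e = x}

/-- Membership in the family ℱ : fractional matchings of total weight m*(G) taking
values in {0, 1/2, 1}. -/
def InOptFamily [Fintype V] [DecidableEq V] (G : SimpleGraph V) (f : Sym2 V → ℝ) : Prop :=
  IsFracMatching G f ∧ (∑ e : Sym2 V, f e) = fracMatchingNumber G ∧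
    ∀ e : Sym2 V, f e = 0 ∨ f e = 1 / 2 ∨ f e = 1

/-- An optimal fractional matching: a member of ℱ with the largest number of
edges of weight 1. -/
def IsOptFracMatching [Fintype V] [DecidableEq V] (G : SimpleGraph V) (f : Sym2 V → ℝ) : Prop :=
  InOptFamily G f ∧
    ∀ g : Sym2 V → ℝ, InOptFamily G g →
      {e : Sym2 V | g e = 1}.ncard ≤ {e : Sym2 V | f e = 1}.ncard

/-- E₁(C) : the edges of `G` with exactly one endpoint on the cycle `C`. -/
def cutEdges (G : SimpleGraph V) (C : G.Subgraph) : Set (Sym2 V) :=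
  {e | e ∈ G.edgeSet ∧ ∃ a b : V, e = s(a, b) ∧ a ∈ C.verts ∧ b ∉ C.verts}

/-!
Write `H = H₁ + H₂` for the parts of the Hermitian matrix supported on the even and the odd cycle,
which share the vertex `x`. Multiplying the values of a vector along a cycle by the weights of the
edges already traversed turns the kernel equation at an inner vertex into `φ i + φ (i + 2) = 0`, so
along each cycle a kernel vector alternates, `a, b, -a, -b, …`. On the odd cycle, closing up
determines `b` from `a`. Hence a kernel vector is determined by its value at `x` and one further
value on the even cycle, and the corank is at most two. Equality means that both values are free,
which happens exactly when the weights `W₁`, `W₂` of the two cycles satisfy `W₁ = (-1) ^ (p / 2)`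
and `W₂ + W₂⁻¹ = 0`; since `W = I ^ σ` up to the sign of `σ`, these are the two signature
conditions. Finally `G` has a perfect matching and exactly one even cycle, so
`2 m(G) - 2 κ(G) = |V| - 2`.
-/

open SimpleGraph Finset
open Complex (I)
open scoped Matrix

/-! ### Linear algebra and powers of `I` -/

theorem rank_add_finrank_eq_card_iff {m n K W : Type*} [Fintype n] [Field K]
    [AddCommGroup W] [Module K W] [FiniteDimensional K W] (A : Matrix m n K)
    (e : (n → K) →ₗ[K] W) (he : ∀ h, A *ᵥ h = 0 → e h = 0 → h = 0) :
    A.rank + Module.finrank K W = Fintype.card n ↔ ∀ y, ∃ h, A *ᵥ h = 0 ∧ e h = y := by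
  have hrank : A.rank + Module.finrank K (LinearMap.ker A.mulVecLin) = Fintype.card n := by
    rw [Matrix.rank, LinearMap.finrank_range_add_finrank_ker, Module.finrank_fintype_fun_eq_card]
  let f := e.domRestrict (LinearMap.ker A.mulVecLin)
  have hf : Function.Injective f :=
    (injective_iff_map_eq_zero f).2 fun h hh => Subtype.ext (he h h.2 hh)
  have hsurj : Function.Surjective f ↔ ∀ y, ∃ h, A *ᵥ h = 0 ∧ e h = y := by
    simp [Function.Surjective, f]
  rw [← hsurj, ← hrank, Nat.add_left_cancel_iff]
  constructor
  · intro hdim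
    exact (LinearMap.injective_iff_surjective_of_finrank_eq_finrank hdim.symm).1 hf
  · intro hs
    exact (LinearEquiv.ofBijective f ⟨hf, hs⟩).finrank_eq.symm

/-- The sequence with first terms `a`, `b` and each further term the negative of the one two
places earlier: `a, b, -a, -b, a, …`. Kernel vectors have this form along a cycle. -/
def alternate {R : Type*} [Neg R] (a b : R) : ℕ → R
  | 0 => a
  | 1 => b
  | i + 2 => -alternate a b i

section Alternate

variable {R : Type*} [Ring R] (a b : R)

theorem alternate_two_mul (k : ℕ) : alternate a b (2 * k) = (-1) ^ k * a := by
  induction k with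
  | zero => simp [alternate]
  | succ k ih => rw [Nat.mul_succ, alternate, ih, pow_succ]; simp

theorem alternate_two_mul_add_one (k : ℕ) : alternate a b (2 * k + 1) = (-1) ^ k * b := by
  induction k with
  | zero => simp [alternate]
  | succ k ih => rw [Nat.mul_succ, add_right_comm, alternate, ih, pow_succ]; simp

theorem eq_alternate_iff {f : ℕ → R} {n : ℕ} :
    (∀ i ≤ n, f i = alternate (f 0) (f 1) i) ↔ ∀ i, i + 1 < n → f i + f (i + 2) = 0 := by
  constructor
  · intro h i hi
    rw [h i (by omega), h (i + 2) (by omega), alternate, add_neg_cancel]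
  · intro h i
    induction i using Nat.strongRecOn with
    | _ i ih =>
      intro hi
      match i with
      | 0 | 1 => simp only [alternate]
      | i + 2 => rw [alternate, ← ih i (by omega) (by omega), eq_neg_iff_add_eq_zero, add_comm,
          h i (by omega)]

end Alternate

-- For two cycles of weights `W₁`, `W₂` at a common vertex: `a` and `b` are the values of a kernel
-- vector there and next to it on the even cycle, and the three equations say that it closes up
-- along each cycle and satisfies the kernel equation at the common vertex.
theorem forall_exists_alternate_iff {K : Type*} [Field K] {m : ℕ} (hm : m ≠ 0) (l : ℕ)
    (W₁ W₂ : K) :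
    (∀ a b, alternate a b (2 * m) = W₁ * a ∧ ∃ c, alternate a c (2 * l + 1) = W₂ * a ∧
      b + W₁⁻¹ * alternate a b (2 * m - 1) + (c + W₂⁻¹ * alternate a c (2 * l)) = 0) ↔
    W₁ = (-1) ^ m ∧ W₂ + W₂⁻¹ = 0 := by
  obtain ⟨m, rfl⟩ := Nat.exists_eq_succ_of_ne_zero hm
  have hl : (-1 : K) ^ l * (-1) ^ l = 1 := by rw [← mul_pow, neg_one_mul, neg_neg, one_pow]
  rw [show 2 * m.succ - 1 = 2 * m + 1 by omega]
  simp only [alternate_two_mul, alternate_two_mul_add_one]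
  constructor
  · intro hall
    obtain ⟨h₁, c, hc, hflux⟩ := hall 1 0
    rw [mul_one, mul_one] at h₁
    refine ⟨h₁.symm, ?_⟩
    linear_combination (-1) ^ l * hflux - hc - W₂⁻¹ * hl
  · rintro ⟨h₁, h₂⟩ a b
    refine ⟨by rw [h₁], (-1) ^ l * (W₂ * a), by linear_combination W₂ * a * hl, ?_⟩
    have hcancel : W₁⁻¹ * (-1) ^ m = -1 := by
      rw [h₁, Nat.succ_eq_add_one, pow_succ, mul_inv, inv_neg_one, mul_right_comm,
        inv_mul_cancel₀ (pow_ne_zero m (neg_ne_zero.2 one_ne_zero)), one_mul]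
    linear_combination b * hcancel + (-1) ^ l * a * h₂

theorem I_zpow_eq_I_zpow_iff (a b : ℤ) : I ^ a = I ^ b ↔ 4 ∣ a - b := by
  rw [← Nat.cast_ofNat, ← Complex.isPrimitiveRoot_I.zpow_eq_one_iff_dvd,
    zpow_sub₀ Complex.I_ne_zero, div_eq_one_iff_eq (zpow_ne_zero b Complex.I_ne_zero)]

theorem I_zpow_eq_neg_one_pow_iff (σ : ℤ) (m : ℕ) :
    I ^ σ = (-1) ^ m ↔ σ.natAbs % 4 = 2 * m % 4 := by
  rw [← Complex.I_sq, ← pow_mul, ← zpow_natCast, I_zpow_eq_I_zpow_iff]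
  omega

theorem I_zpow_add_inv_eq_zero_iff (σ : ℤ) : I ^ σ + (I ^ σ)⁻¹ = 0 ↔ Odd σ.natAbs := by
  have hsq : I ^ σ + (I ^ σ)⁻¹ = 0 ↔ I ^ (2 * σ) = I ^ (2 : ℤ) := by
    have hI : I ^ σ ≠ 0 := zpow_ne_zero σ Complex.I_ne_zero
    rw [two_mul, zpow_add₀ Complex.I_ne_zero, ← mul_eq_zero_iff_left hI, mul_add,
      mul_inv_cancel₀ hI, zpow_ofNat, Complex.I_sq, eq_neg_iff_add_eq_zero]
  rw [hsq, I_zpow_eq_I_zpow_iff, Int.natAbs_odd, Int.odd_iff]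
  omega

/-! ### Matchings -/

theorem two_mul_ncard_edgeSet_of_isMatching [Finite V] {G : SimpleGraph V} {N : G.Subgraph}
    (hN : N.IsMatching) : 2 * N.edgeSet.ncard = N.verts.ncard := by
  have := Fintype.ofFinite V
  have hdeg (v : V) : N.spanningCoe.degree v = if v ∈ N.verts then 1 else 0 := by
    rw [Subgraph.degree_spanningCoe]
    split_ifs with hv
    · exact Subgraph.isMatching_iff_forall_degree.1 hN v hv
    · exact Subgraph.degree_of_notMem_verts hv
  calc 2 * N.edgeSet.ncard = 2 * #N.spanningCoe.edgeFinset := by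
        rw [← N.edgeSet_spanningCoe, ← coe_edgeFinset, Set.ncard_coe_finset]
    _ = ∑ v, N.spanningCoe.degree v := N.spanningCoe.sum_degrees_eq_twice_card_edges.symm
    _ = N.verts.ncard := by
        simp only [hdeg, sum_boole, Nat.cast_id, ← Set.ncard_coe_finset, coe_filter_univ,
          Set.ofPred_mem_eq]

theorem two_mul_matchingNumber_of_isPerfectMatching [Finite V] {G : SimpleGraph V}
    {N : G.Subgraph} (hN : N.IsPerfectMatching) : 2 * matchingNumber G = Nat.card V := by
  have hcard : 2 * N.edgeSet.ncard = Nat.card V := by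
    rw [two_mul_ncard_edgeSet_of_isMatching hN.1, hN.2.verts_eq_univ, Set.ncard_univ]
  have hmax : IsGreatest {k | ∃ N : G.Subgraph, N.IsMatching ∧ N.edgeSet.ncard = k}
      N.edgeSet.ncard := by
    refine ⟨⟨N, hN.1, rfl⟩, ?_⟩
    rintro _ ⟨N', hN', rfl⟩
    have := two_mul_ncard_edgeSet_of_isMatching hN'
    have := Set.ncard_le_card N'.verts
    omega
  rw [matchingNumber, hmax.csSup_eq, hcard]

theorem exists_isMatching_of_isPath {G : SimpleGraph V} {a b : V} :
    ∀ {w : G.Walk a b}, w.IsPath → Odd w.length →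
      ∃ N : G.Subgraph, N.IsMatching ∧ N.verts = {v | v ∈ w.support}
  | .nil, _, hodd => by simp at hodd
  | .cons h .nil, _, _ => ⟨G.subgraphOfAdj h, Subgraph.IsMatching.subgraphOfAdj h, by ext; simp⟩
  | .cons h (.cons h' w), hp, hodd => by
    simp only [Walk.cons_isPath_iff, Walk.support_cons, List.mem_cons, not_or] at hp
    obtain ⟨N, hN, hNw⟩ := exists_isMatching_of_isPath hp.1.1
      (by simpa [Nat.odd_add, Nat.even_add_one] using hodd)
    refine ⟨G.subgraphOfAdj h ⊔ N, (Subgraph.IsMatching.subgraphOfAdj h).sup hN ?_, ?_⟩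
    · rw [hN.support_eq_verts, hNw, support_subgraphOfAdj, Set.disjoint_left]
      rintro v (rfl | rfl)
      exacts [hp.2.2, hp.1.2]
    · ext v
      simp [hNw, or_assoc]

/-! ### Cycle subgraphs -/

namespace IsCycleSubgraph

variable {G : SimpleGraph V} {C D : G.Subgraph} {x : V}

theorem of_isCycle {w : G.Walk x x} (hw : w.IsCycle) : IsCycleSubgraph w.toSubgraph :=
  ⟨w.toSubgraph_connected, fun _ hv =>
    hw.ncard_neighborSet_toSubgraph_eq_two (w.mem_verts_toSubgraph.1 hv)⟩

theorem adj_iff_of_le (hC : IsCycleSubgraph C) (hD : IsCycleSubgraph D) (hle : D ≤ C) {u v : V}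
    (hu : u ∈ D.verts) : D.Adj u v ↔ C.Adj u v := by
  have hCu := hC.2 u (hle.1 hu)
  have hfin := Set.finite_of_ncard_ne_zero (hCu.trans_ne two_ne_zero)
  have hnbr : {v | D.Adj u v} = {v | C.Adj u v} :=
    Set.eq_of_subset_of_ncard_le (fun v hv => hle.2 hv) (by rw [hCu, hD.2 u hu]) hfin
  exact Set.ext_iff.1 hnbr v

theorem eq_of_le (hC : IsCycleSubgraph C) (hD : IsCycleSubgraph D) (hle : D ≤ C) : D = C := by
  have hverts : C.verts ⊆ D.verts := by
    intro v hv
    by_contra hvD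
    obtain ⟨u, hu⟩ := hD.1.nonempty
    obtain ⟨w⟩ := hC.1.preconnected ⟨u, hle.1 hu⟩ ⟨v, hv⟩
    obtain ⟨d, -, hfst, hsnd⟩ := w.exists_boundary_dart (Subtype.val ⁻¹' D.verts) hu hvD
    exact hsnd (D.edge_vert ((hC.adj_iff_of_le hD hle hfst).2 d.adj).symm)
  exact hle.antisymm ⟨hverts, fun u v huv =>
    (hC.adj_iff_of_le hD hle (hverts (C.edge_vert huv))).2 huv⟩

theorem exists_isCycle_toSubgraph_eq [Finite V] (hC : IsCycleSubgraph C) (hx : x ∈ C.verts) :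
    ∃ w : G.Walk x x, w.IsCycle ∧ w.toSubgraph = C := by
  have hcycles : C.spanningCoe.IsCycles := fun v ⟨u, hu⟩ => hC.2 v (C.edge_vert hu)
  have hne : (C.spanningCoe.neighborSet x).Nonempty :=
    Set.nonempty_of_ncard_ne_zero ((hC.2 x hx).trans_ne two_ne_zero)
  obtain ⟨w, hw, -⟩ := hcycles.exists_cycle_toSubgraph_verts_eq_connectedComponentSupp rfl hne
  have hw' : (w.mapLe C.spanningCoe_le).IsCycle := hw.mapLe _
  have hadj {u v : V} (huv : (w.mapLe C.spanningCoe_le).toSubgraph.Adj u v) : C.Adj u v :=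
    ((Walk.adj_toSubgraph_mapLe _).1 huv).adj_sub
  refine ⟨_, hw', hC.eq_of_le (of_isCycle hw') ⟨fun v hv => ?_, fun u v => hadj⟩⟩
  obtain ⟨u, hu⟩ := Set.nonempty_of_ncard_ne_zero
    (((of_isCycle hw').2 v hv).trans_ne two_ne_zero)
  exact C.edge_vert (hadj hu)

end IsCycleSubgraph

section CycleWalk

variable {G : SimpleGraph V} {x v : V} {w : G.Walk x x}

theorem eq_of_getVert_eq_of_lt (hw : w.IsCycle) {i j : ℕ} (hi : i < w.length) (hj : j < w.length)
    (h : w.getVert i = w.getVert j) : i = j :=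
  hw.getVert_injOn' (Nat.le_sub_one_of_lt hi) (Nat.le_sub_one_of_lt hj) h

theorem exists_getVert_eq_of_lt (hw : w.IsCycle) (hv : v ∈ w.support) :
    ∃ i < w.length, w.getVert i = v := by
  obtain ⟨i, rfl, hi⟩ := Walk.mem_support_iff_exists_getVert.1 hv
  obtain hi | rfl := hi.lt_or_eq
  · exact ⟨i, hi, rfl⟩
  · exact ⟨0, by have := hw.three_le_length; omega, by simp⟩

theorem ncard_verts_toSubgraph (hw : w.IsCycle) : w.toSubgraph.verts.ncard = w.length := by
  have himage : w.toSubgraph.verts = w.getVert '' Set.Iio w.length := by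
    ext v
    rw [w.mem_verts_toSubgraph]
    exact ⟨exists_getVert_eq_of_lt hw, by rintro ⟨i, -, rfl⟩; exact w.getVert_mem_support i⟩
  have hinj : Set.InjOn w.getVert (Set.Iio w.length) :=
    fun i hi j hj => eq_of_getVert_eq_of_lt hw hi hj
  rw [himage, hinj.ncard_image, Set.ncard_eq_toFinset_card', Set.toFinset_Iio, Nat.card_Iio]

theorem exists_function_getVert_eq (hw : w.IsCycle) {α : Type*} (F : ℕ → α)
    (hF : F w.length = F 0) :
    ∃ h : V → α, ∀ i ≤ w.length, h (w.getVert i) = F i := by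
  have hinj : Set.InjOn w.getVert (Set.Iio w.length) :=
    fun i hi j hj => eq_of_getVert_eq_of_lt hw hi hj
  have hlt {i : ℕ} (hi : i < w.length) :
      F (Function.invFunOn w.getVert (Set.Iio w.length) (w.getVert i)) = F i :=
    congrArg F (hinj.leftInvOn_invFunOn hi)
  refine ⟨F ∘ Function.invFunOn w.getVert (Set.Iio w.length), fun i hi => ?_⟩
  obtain hi | rfl := hi.lt_or_eq
  · exact hlt hi
  · rw [Function.comp_apply, w.getVert_length]
    have := hlt (i := 0) (by have := hw.three_le_length; omega)
    rwa [w.getVert_zero, ← hF] at this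

end CycleWalk

section CycleMatching

variable [Finite V] {G : SimpleGraph V} {C : G.Subgraph}

theorem IsCycleSubgraph.exists_isMatching_of_even (hC : IsCycleSubgraph C)
    (heven : Even C.verts.ncard) : ∃ N : G.Subgraph, N.IsMatching ∧ N.verts = C.verts := by
  obtain ⟨x, hx⟩ := hC.1.nonempty
  obtain ⟨w, hw, rfl⟩ := hC.exists_isCycle_toSubgraph_eq hx
  have hlen := Walk.length_tail_add_one hw.not_nil
  rw [ncard_verts_toSubgraph hw, ← hlen, Nat.even_add_one, Nat.not_even_iff_odd] at heven
  obtain ⟨N, hN, hverts⟩ := exists_isMatching_of_isPath hw.isPath_tail heven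
  refine ⟨N, hN, hverts.trans ?_⟩
  ext v
  have hxtail := w.end_mem_tail_support hw.not_nil
  rw [Set.mem_ofPred_eq, w.mem_verts_toSubgraph, Walk.support_tail_of_not_nil w hw.not_nil,
    w.mem_support_iff, or_iff_right_of_imp (by rintro rfl; exact hxtail)]

theorem IsCycleSubgraph.exists_isMatching_of_odd (hC : IsCycleSubgraph C)
    (hodd : Odd C.verts.ncard) {x : V} (hx : x ∈ C.verts) :
    ∃ N : G.Subgraph, N.IsMatching ∧ N.verts = C.verts \ {x} := by
  obtain ⟨w, hw, rfl⟩ := hC.exists_isCycle_toSubgraph_eq hx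
  have hlen := Walk.length_tail_add_one hw.not_nil
  have hlen' := w.tail.length_dropLast
  have hthree := hw.three_le_length
  have hnil : ¬w.tail.Nil := by rw [Walk.not_nil_iff_lt_length]; omega
  have hsupport := Walk.support_dropLast_concat hnil
  have hnodup := hw.isPath_tail.support_nodup
  rw [← hsupport] at hnodup
  rw [ncard_verts_toSubgraph hw, ← hlen, Nat.odd_add_one, Nat.not_odd_iff_even] at hodd
  obtain ⟨N, hN, hverts⟩ := exists_isMatching_of_isPath hw.isPath_tail.dropLast
    (hlen' ▸ Nat.Even.sub_odd (by omega) hodd odd_one)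
  refine ⟨N, hN, hverts.trans (Set.ext fun v => ?_)⟩
  rw [Set.mem_ofPred_eq, Set.mem_sdiff_singleton, w.mem_verts_toSubgraph, w.mem_support_iff,
    ← Walk.support_tail_of_not_nil w hw.not_nil, ← hsupport, List.mem_append,
    List.mem_singleton]
  have hne : v ∈ w.tail.dropLast.support → v ≠ x := by
    rintro hv rfl
    exact List.disjoint_of_nodup_append hnodup hv (List.mem_singleton_self _)
  tauto

end CycleMatching

section Separation

variable {G : SimpleGraph V} {C D : G.Subgraph} {x y : V}

theorem mem_verts_of_notMem_support
    (hnbr : ∀ ⦃u v⦄, u ∈ C.verts → u ≠ x → G.Adj u v → C.Adj u v) {v : V} (hy : y ∈ C.verts)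
    (w : G.Walk y v) (hw : x ∉ w.support) : v ∈ C.verts := by
  by_contra hv
  obtain ⟨d, hd, hfst, hsnd⟩ := w.exists_boundary_dart C.verts hy hv
  have hne : d.fst ≠ x := by
    rintro rfl
    exact hw (w.dart_fst_mem_support_of_mem_darts hd)
  exact hsnd (C.edge_vert (hnbr hfst hne d.adj).symm)

theorem notMem_support_takeUntil_or_dropUntil [DecidableEq V] {w : G.Walk y y} (hw : w.IsCycle)
    {v : V} (hv : v ∈ w.support) (hx : x ≠ y) (hvx : v ≠ x) :
    x ∉ (w.takeUntil v hv).support ∨ x ∉ (w.dropUntil v hv).support := by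
  have hnodup := hw.support_nodup
  rw [← w.take_spec hv, Walk.tail_support_append] at hnodup
  by_contra! hmem
  refine List.disjoint_of_nodup_append hnodup (a := x) ?_ ?_
  · exact ((Walk.mem_support_iff _).1 hmem.1).resolve_left hx
  · exact ((Walk.mem_support_iff _).1 hmem.2).resolve_left hvx.symm

-- Of the two paths along `D` from `y` to another vertex, one avoids `x` and therefore stays in `C`.
theorem IsCycleSubgraph.eq_of_mem_of_mem [Finite V] (hC : IsCycleSubgraph C)
    (hD : IsCycleSubgraph D)
    (hnbr : ∀ ⦃u v⦄, u ∈ C.verts → u ≠ x → G.Adj u v → C.Adj u v)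
    (hyC : y ∈ C.verts) (hyD : y ∈ D.verts) (hyx : y ≠ x) : D = C := by
  obtain ⟨w, hw, rfl⟩ := hD.exists_isCycle_toSubgraph_eq hyD
  have hmem {v : V} (hv : v ∈ w.support) (hvx : v ≠ x) : v ∈ C.verts := by
    obtain h | h := notMem_support_takeUntil_or_dropUntil hw hv hyx.symm hvx
    · exact mem_verts_of_notMem_support hnbr hyC _ h
    · exact mem_verts_of_notMem_support hnbr hyC (w.dropUntil v hv).reverse
        (by rwa [Walk.support_reverse, List.mem_reverse])
  have hadj {u v : V} (huv : w.toSubgraph.Adj u v) (hux : u ≠ x) : C.Adj u v :=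
    hnbr (hmem (w.mem_verts_toSubgraph.1 (w.toSubgraph.edge_vert huv)) hux) hux huv.adj_sub
  have hadj' {u v : V} (huv : w.toSubgraph.Adj u v) : C.Adj u v := by
    by_cases hux : u = x
    · exact (hadj huv.symm fun hvx => huv.adj_sub.ne (hux.trans hvx.symm)).symm
    · exact hadj huv hux
  refine hC.eq_of_le hD ⟨fun v hv => ?_, fun u v => hadj'⟩
  obtain ⟨u, hu⟩ := Set.nonempty_of_ncard_ne_zero ((hD.2 v hv).trans_ne two_ne_zero)
  exact C.edge_vert (hadj' hu)

end Separation

/-! ### Signatures and weights of walks -/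

theorem walkSignature_rotate [DecidableEq V] (M : MixedGraph V) {u x : V} (w : M.graph.Walk u u)
    (hx : x ∈ w.support) : walkSignature M (w.rotate x hx) = walkSignature M w := by
  simp only [walkSignature, (w.rotate_darts x hx).perm.countP_eq]

theorem cycleSig_iff_exists_walk_at (M : MixedGraph V) {C : M.graph.Subgraph} {P : ℕ → Prop}
    {x : V} (hx : x ∈ C.verts) :
    CycleSig M C P ↔
      ∃ w : M.graph.Walk x x, w.IsCycle ∧ w.toSubgraph = C ∧ P (walkSignature M w) := by
  constructor
  · rintro ⟨u, w, hw, hverts, hedges, hP⟩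
    have hxw : x ∈ w.support := by rwa [← hverts] at hx
    have hwC : w.toSubgraph = C := by
      ext a b
      · rw [w.mem_verts_toSubgraph, ← hverts, Set.mem_ofPred_eq]
      · rw [Walk.adj_toSubgraph_iff_mem_edges, ← Subgraph.mem_edgeSet, ← hedges,
          Set.mem_ofPred_eq]
    exact ⟨w.rotate x hxw, hw.rotate hxw, by rwa [Walk.toSubgraph_rotate],
      by rwa [walkSignature_rotate]⟩
  · rintro ⟨w, hw, rfl, hP⟩
    exact ⟨x, w, hw, Set.ext fun _ => w.mem_verts_toSubgraph.symm,
      Set.ext fun _ => w.mem_edges_toSubgraph.symm, hP⟩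

namespace MixedGraph

/-- The number of arcs traversed forwards minus the number of arcs traversed backwards by a walk,
whose absolute value on a closed walk is `walkSignature`. -/
def netArcs (M : MixedGraph V) {a b : V} (w : M.graph.Walk a b) : ℤ :=
  (w.darts.countP fun d => M.arc d.toProd.1 d.toProd.2 : ℤ) -
    (w.darts.countP fun d => M.arc d.toProd.2 d.toProd.1 : ℤ)

variable [Fintype V] [DecidableEq V] (M : MixedGraph V)

theorem hMatrix_apply_eq_zero {a b : V} (h : ¬M.graph.Adj a b) : M.hMatrix a b = 0 := by
  have hab : ¬M.arc a b := fun h' => h (M.arc_adj a b h')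
  have hba : ¬M.arc b a := fun h' => h (M.arc_adj b a h').symm
  simp [hMatrix, h, hab, hba]

theorem hMatrix_apply_eq_I_zpow {a b : V} (h : M.graph.Adj a b) :
    M.hMatrix a b = I ^ ((if M.arc a b then 1 else 0) - (if M.arc b a then 1 else 0) : ℤ) := by
  have hanti := M.arc_antisymm a b
  by_cases hab : M.arc a b <;> by_cases hba : M.arc b a <;> simp_all [hMatrix]

theorem hMatrix_mul_hMatrix_swap {a b : V} (h : M.graph.Adj a b) :
    M.hMatrix a b * M.hMatrix b a = 1 := by
  rw [M.hMatrix_apply_eq_I_zpow h, M.hMatrix_apply_eq_I_zpow h.symm,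
    ← zpow_add₀ Complex.I_ne_zero, sub_add_sub_cancel, sub_self, zpow_zero]

section Walk

variable {a b : V} (w : M.graph.Walk a b)

/-- The product of the entries of the Hermitian matrix along the first `i` steps of a walk. -/
noncomputable def walkWeight (i : ℕ) : ℂ :=
  ∏ k ∈ range i, M.hMatrix (w.getVert k) (w.getVert (k + 1))

theorem walkWeight_zero : M.walkWeight w 0 = 1 := prod_range_zero _

theorem walkWeight_succ (i : ℕ) :
    M.walkWeight w (i + 1) = M.walkWeight w i * M.hMatrix (w.getVert i) (w.getVert (i + 1)) :=
  prod_range_succ _ _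

theorem walkWeight_succ_mul_hMatrix {i : ℕ} (hi : i < w.length) :
    M.walkWeight w (i + 1) * M.hMatrix (w.getVert (i + 1)) (w.getVert i) = M.walkWeight w i := by
  rw [walkWeight_succ, mul_assoc, M.hMatrix_mul_hMatrix_swap (w.adj_getVert_succ hi), mul_one]

theorem walkWeight_ne_zero {i : ℕ} (hi : i ≤ w.length) : M.walkWeight w i ≠ 0 :=
  prod_ne_zero_iff.2 fun _ hk => left_ne_zero_of_mul_eq_one
    (M.hMatrix_mul_hMatrix_swap (w.adj_getVert_succ ((mem_range.1 hk).trans_le hi)))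

end Walk

theorem walkWeight_length {a b : V} (w : M.graph.Walk a b) :
    M.walkWeight w w.length = I ^ M.netArcs w := by
  induction w with
  | nil => simp [walkWeight, netArcs]
  | cons h w ih =>
    have hcons : M.walkWeight (.cons h w) (w.length + 1) =
        M.walkWeight w w.length * M.hMatrix _ _ := prod_range_succ' _ _
    rw [Walk.length_cons, hcons, ih, Walk.getVert_cons_succ, Walk.getVert_zero,
      Walk.getVert_zero, M.hMatrix_apply_eq_I_zpow h, ← zpow_add₀ Complex.I_ne_zero]
    simp only [netArcs, Walk.darts_cons, List.countP_cons]
    push_cast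
    ring_nf

section SubgraphMatrix

/-- The part of the Hermitian matrix supported on the edges of a subgraph, with rows and columns
still indexed by all vertices. -/
noncomputable def subgraphMatrix (C : M.graph.Subgraph) : Matrix V V ℂ :=
  .of fun u v => if C.Adj u v then M.hMatrix u v else 0

variable {C : M.graph.Subgraph} (h : V → ℂ) {v : V}

theorem subgraphMatrix_apply (u v : V) :
    M.subgraphMatrix C u v = if C.Adj u v then M.hMatrix u v else 0 := rfl

theorem subgraphMatrix_mulVec_apply_of_notMem (hv : v ∉ C.verts) :
    (M.subgraphMatrix C *ᵥ h) v = 0 :=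
  sum_eq_zero fun _ _ => mul_eq_zero_of_left (if_neg fun hadj => hv (C.edge_vert hadj)) _

theorem subgraphMatrix_mulVec_congr {h h' : V → ℂ} (heq : ∀ v ∈ C.verts, h v = h' v) :
    M.subgraphMatrix C *ᵥ h = M.subgraphMatrix C *ᵥ h' := by
  funext v
  simp only [Matrix.mulVec, dotProduct, subgraphMatrix_apply]
  refine sum_congr rfl fun u _ => ?_
  split_ifs with hadj
  · rw [heq u (C.edge_vert hadj.symm)]
  · rw [zero_mul, zero_mul]

theorem subgraphMatrix_mulVec_apply_of_neighborSet_eq_pair {a b : V} (hab : a ≠ b)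
    (hv : C.neighborSet v = {a, b}) :
    (M.subgraphMatrix C *ᵥ h) v = M.hMatrix v a * h a + M.hMatrix v b * h b := by
  have hadj (u : V) : C.Adj v u ↔ u = a ∨ u = b := by
    rw [← Subgraph.mem_neighborSet, hv, Set.mem_insert_iff, Set.mem_singleton_iff]
  calc (M.subgraphMatrix C *ᵥ h) v = ∑ u ∈ {a, b}, M.subgraphMatrix C v u * h u := by
        refine (sum_subset (subset_univ _) fun u _ hu => ?_).symm
        rw [mem_insert, mem_singleton, ← hadj] at hu
        exact mul_eq_zero_of_left (if_neg hu) _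
    _ = M.hMatrix v a * h a + M.hMatrix v b * h b := by
        rw [sum_pair hab, subgraphMatrix_apply, subgraphMatrix_apply,
          if_pos ((hadj a).2 (.inl rfl)), if_pos ((hadj b).2 (.inr rfl))]

end SubgraphMatrix

/-! ### Kernel vectors along a cycle -/

/-- The values of `h` along a walk, transported to its start by the edge weights. In these
coordinates the kernel equation at an inner vertex of a cycle reads `φ i + φ (i + 2) = 0`. -/
noncomputable def transport {a b : V} (w : M.graph.Walk a b) (h : V → ℂ) (i : ℕ) : ℂ :=
  M.walkWeight w i * h (w.getVert i)

section Cycle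

variable {x : V} {w : M.graph.Walk x x} (h : V → ℂ)

theorem transport_zero : M.transport w h 0 = h x := by
  rw [transport, walkWeight_zero, Walk.getVert_zero, one_mul]

theorem transport_length : M.transport w h w.length = M.walkWeight w w.length * h x := by
  rw [transport, Walk.getVert_length]

theorem walkWeight_mul_subgraphMatrix_mulVec (hw : w.IsCycle) {i : ℕ} (hi : i + 1 < w.length) :
    M.walkWeight w (i + 1) * (M.subgraphMatrix w.toSubgraph *ᵥ h) (w.getVert (i + 1)) =
      M.transport w h i + M.transport w h (i + 2) := by
  have hnbr := hw.neighborSet_toSubgraph_internal i.succ_ne_zero hi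
  have hne := hw.getVert_sub_one_ne_getVert_add_one hi.le
  rw [M.subgraphMatrix_mulVec_apply_of_neighborSet_eq_pair h hne hnbr, Nat.add_sub_cancel,
    mul_add, ← mul_assoc, ← mul_assoc, M.walkWeight_succ_mul_hMatrix w (by omega),
    ← walkWeight_succ, transport, transport]

theorem subgraphMatrix_mulVec_base (hw : w.IsCycle) :
    (M.subgraphMatrix w.toSubgraph *ᵥ h) x = M.transport w h 1 +
      (M.walkWeight w w.length)⁻¹ * M.transport w h (w.length - 1) := by
  have hlen : w.length - 1 + 1 = w.length := by have := hw.three_le_length; omega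
  have hback : M.walkWeight w w.length * M.hMatrix x w.penultimate =
      M.walkWeight w (w.length - 1) := by
    have := M.walkWeight_succ_mul_hMatrix w (i := w.length - 1) (by omega)
    rwa [hlen, Walk.getVert_length] at this
  rw [M.subgraphMatrix_mulVec_apply_of_neighborSet_eq_pair h hw.snd_ne_penultimate
    hw.neighborSet_toSubgraph_endpoint, transport, transport, ← hback, walkWeight_succ,
    walkWeight_zero, one_mul, Walk.getVert_zero, mul_assoc,
    inv_mul_cancel_left₀ (M.walkWeight_ne_zero w le_rfl)]

/-- The vector `h` satisfies the kernel equations of the cycle `w` at all vertices except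
possibly its base point. -/
def IsNullOffBase (w : M.graph.Walk x x) (h : V → ℂ) : Prop :=
  ∀ v ≠ x, (M.subgraphMatrix w.toSubgraph *ᵥ h) v = 0

variable {M h}

theorem isNullOffBase_iff (hw : w.IsCycle) :
    M.IsNullOffBase w h ↔
      ∀ i ≤ w.length, M.transport w h i = alternate (h x) (M.transport w h 1) i := by
  rw [← M.transport_zero (w := w) h, eq_alternate_iff]
  constructor
  · intro hnull i hi
    have hne : w.getVert (i + 1) ≠ x := fun heq => by
      have := eq_of_getVert_eq_of_lt hw hi (by omega) (heq.trans w.getVert_zero.symm)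
      omega
    rw [← M.walkWeight_mul_subgraphMatrix_mulVec h hw hi, hnull _ hne, mul_zero]
  · intro hrec v hvx
    by_cases hv : v ∈ w.toSubgraph.verts
    · obtain ⟨i, hi, rfl⟩ := exists_getVert_eq_of_lt hw (w.mem_verts_toSubgraph.1 hv)
      obtain _ | i := i
      · exact absurd w.getVert_zero hvx
      · have := hrec i hi
        rw [← M.walkWeight_mul_subgraphMatrix_mulVec h hw hi] at this
        exact (mul_eq_zero.1 this).resolve_left (M.walkWeight_ne_zero w hi.le)
    · exact M.subgraphMatrix_mulVec_apply_of_notMem h hv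

theorem IsNullOffBase.alternate_length (hw : w.IsCycle) (hnull : M.IsNullOffBase w h) :
    alternate (h x) (M.transport w h 1) w.length = M.walkWeight w w.length * h x := by
  rw [← (isNullOffBase_iff hw).1 hnull _ le_rfl, transport_length]

theorem IsNullOffBase.mulVec_base (hw : w.IsCycle) (hnull : M.IsNullOffBase w h) :
    (M.subgraphMatrix w.toSubgraph *ᵥ h) x = M.transport w h 1 +
      (M.walkWeight w w.length)⁻¹ * alternate (h x) (M.transport w h 1) (w.length - 1) := by
  rw [M.subgraphMatrix_mulVec_base h hw, (isNullOffBase_iff hw).1 hnull (w.length - 1) tsub_le_self]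

theorem IsNullOffBase.apply_eq_zero (hw : w.IsCycle) (hnull : M.IsNullOffBase w h) (hx : h x = 0)
    (hsnd : M.transport w h 1 = 0) {v : V} (hv : v ∈ w.support) : h v = 0 := by
  obtain ⟨i, hi, rfl⟩ := exists_getVert_eq_of_lt hw hv
  have hzero : alternate (0 : ℂ) 0 i = 0 := by
    obtain ⟨k, rfl | rfl⟩ := i.even_or_odd'
    · rw [alternate_two_mul, mul_zero]
    · rw [alternate_two_mul_add_one, mul_zero]
  have htransport := (isNullOffBase_iff hw).1 hnull i hi.le
  rw [hx, hsnd, hzero] at htransport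
  exact (mul_eq_zero.1 htransport).resolve_left (M.walkWeight_ne_zero w hi.le)

theorem exists_isNullOffBase (hw : w.IsCycle) {a b : ℂ}
    (hab : alternate a b w.length = M.walkWeight w w.length * a) :
    ∃ h : V → ℂ, M.IsNullOffBase w h ∧ h x = a ∧ M.transport w h 1 = b := by
  obtain ⟨h, hh⟩ := exists_function_getVert_eq hw
    (fun i => (M.walkWeight w i)⁻¹ * alternate a b i) (by
      simp only [hab, walkWeight_zero, alternate, inv_one, one_mul,
        inv_mul_cancel_left₀ (M.walkWeight_ne_zero w le_rfl)])
  have htransport {i : ℕ} (hi : i ≤ w.length) : M.transport w h i = alternate a b i := by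
    rw [transport, hh i hi, mul_inv_cancel_left₀ (M.walkWeight_ne_zero w hi)]
  have hzero : h x = a := by rw [← M.transport_zero (w := w) h, htransport w.length.zero_le]; rfl
  have hone : M.transport w h 1 = b := htransport (by have := hw.three_le_length; omega)
  refine ⟨h, (isNullOffBase_iff hw).2 fun i hi => ?_, hzero, hone⟩
  rw [htransport hi, hzero, hone]

end Cycle

end MixedGraph

/-! ### Two cycles sharing a vertex -/

/-- The graph is the union of the cycles `C₁` and `C₂`, which meet in the vertex `x` only: an
`∞`-graph with its two cycles and its vertex of degree four named. -/
structure IsCycleWedge {G : SimpleGraph V} (C₁ C₂ : G.Subgraph) (x : V) : Prop where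
  left : IsCycleSubgraph C₁
  right : IsCycleSubgraph C₂
  verts_inter_verts : C₁.verts ∩ C₂.verts = {x}
  sup_eq_top : C₁ ⊔ C₂ = ⊤

theorem IsInfinityGraph.exists_isCycleWedge {G : SimpleGraph V} {p q : ℕ}
    (hG : IsInfinityGraph G p q) :
    ∃ (C₁ C₂ : G.Subgraph) (x : V),
      IsCycleWedge C₁ C₂ x ∧ C₁.verts.ncard = p ∧ C₂.verts.ncard = q := by
  obtain ⟨C₁, C₂, hC₁, hC₂, hp, hq, hinter, hsup⟩ := hG
  obtain ⟨x, hx⟩ := Set.ncard_eq_one.1 hinter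
  exact ⟨C₁, C₂, x, ⟨hC₁, hC₂, hx, hsup⟩, hp, hq⟩

namespace IsCycleWedge

section Combinatorics

variable {G : SimpleGraph V} {C₁ C₂ D : G.Subgraph} {x : V}

theorem symm (hW : IsCycleWedge C₁ C₂ x) : IsCycleWedge C₂ C₁ x :=
  ⟨hW.right, hW.left, by rw [Set.inter_comm, hW.verts_inter_verts],
    by rw [sup_comm, hW.sup_eq_top]⟩

theorem base_mem_left (hW : IsCycleWedge C₁ C₂ x) : x ∈ C₁.verts :=
  (hW.verts_inter_verts.ge rfl).1

theorem base_mem_right (hW : IsCycleWedge C₁ C₂ x) : x ∈ C₂.verts :=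
  hW.symm.base_mem_left

theorem eq_base (hW : IsCycleWedge C₁ C₂ x) {v : V} (h₁ : v ∈ C₁.verts) (h₂ : v ∈ C₂.verts) :
    v = x :=
  hW.verts_inter_verts.le ⟨h₁, h₂⟩

theorem verts_union_verts (hW : IsCycleWedge C₁ C₂ x) : C₁.verts ∪ C₂.verts = Set.univ := by
  rw [← Subgraph.verts_sup, hW.sup_eq_top, Subgraph.verts_top]

theorem adj_iff (hW : IsCycleWedge C₁ C₂ x) {u v : V} : G.Adj u v ↔ C₁.Adj u v ∨ C₂.Adj u v := by
  rw [← Subgraph.sup_adj, hW.sup_eq_top, Subgraph.top_adj]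

theorem not_adj_right (hW : IsCycleWedge C₁ C₂ x) {u v : V} (h : C₁.Adj u v) : ¬C₂.Adj u v :=
  fun h' => h.ne ((hW.eq_base (C₁.edge_vert h) (C₂.edge_vert h')).trans
    (hW.eq_base (C₁.edge_vert h.symm) (C₂.edge_vert h'.symm)).symm)

theorem adj_left_of_adj (hW : IsCycleWedge C₁ C₂ x) ⦃u v : V⦄ (hu : u ∈ C₁.verts) (hux : u ≠ x)
    (huv : G.Adj u v) : C₁.Adj u v :=
  (hW.adj_iff.1 huv).resolve_right fun h => hux (hW.eq_base hu (C₂.edge_vert h))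

theorem eq_left_or_eq_right [Finite V] (hW : IsCycleWedge C₁ C₂ x) (hD : IsCycleSubgraph D) :
    D = C₁ ∨ D = C₂ := by
  obtain ⟨y, hyD, hyx⟩ : ∃ y ∈ D.verts, y ≠ x := by
    obtain ⟨v, hv⟩ := hD.1.nonempty
    obtain ⟨u, hu, hux⟩ := Set.exists_ne_of_one_lt_ncard ((hD.2 v hv).symm ▸ one_lt_two) x
    exact ⟨u, D.edge_vert (D.adj_symm hu), hux⟩
  obtain hy | hy := hW.verts_union_verts.ge (Set.mem_univ y)
  · exact .inl (hW.left.eq_of_mem_of_mem hD hW.adj_left_of_adj hy hyD hyx)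
  · exact .inr (hW.right.eq_of_mem_of_mem hD hW.symm.adj_left_of_adj hy hyD hyx)

theorem isCycleSubgraph_and_even_iff [Finite V] (hW : IsCycleWedge C₁ C₂ x)
    (h₁ : Even C₁.verts.ncard) (h₂ : Odd C₂.verts.ncard) :
    IsCycleSubgraph D ∧ Even D.verts.ncard ↔ D = C₁ := by
  constructor
  · rintro ⟨hD, heven⟩
    refine (hW.eq_left_or_eq_right hD).resolve_right ?_
    rintro rfl
    exact Nat.not_even_iff_odd.2 h₂ heven
  · rintro rfl
    exact ⟨hW.left, h₁⟩

theorem isCycleSubgraph_and_odd_iff [Finite V] (hW : IsCycleWedge C₁ C₂ x)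
    (h₁ : Even C₁.verts.ncard) (h₂ : Odd C₂.verts.ncard) :
    IsCycleSubgraph D ∧ Odd D.verts.ncard ↔ D = C₂ := by
  constructor
  · rintro ⟨hD, hodd⟩
    refine (hW.eq_left_or_eq_right hD).resolve_left ?_
    rintro rfl
    exact Nat.not_odd_iff_even.2 h₁ hodd
  · rintro rfl
    exact ⟨hW.right, h₂⟩

theorem evenCycleCount_eq_one [Finite V] (hW : IsCycleWedge C₁ C₂ x) (h₁ : Even C₁.verts.ncard)
    (h₂ : Odd C₂.verts.ncard) : evenCycleCount G = 1 := by
  simp only [evenCycleCount, hW.isCycleSubgraph_and_even_iff h₁ h₂, Set.ofPred_eq_eq_singleton,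
    Set.ncard_singleton]

theorem exists_isPerfectMatching [Finite V] (hW : IsCycleWedge C₁ C₂ x)
    (h₁ : Even C₁.verts.ncard) (h₂ : Odd C₂.verts.ncard) :
    ∃ N : G.Subgraph, N.IsPerfectMatching := by
  obtain ⟨N₁, hN₁, hverts₁⟩ := hW.left.exists_isMatching_of_even h₁
  obtain ⟨N₂, hN₂, hverts₂⟩ := hW.right.exists_isMatching_of_odd h₂ hW.base_mem_right
  refine ⟨N₁ ⊔ N₂, hN₁.sup hN₂ ?_, Subgraph.isSpanning_iff.2 ?_⟩
  · rw [hN₁.support_eq_verts, hN₂.support_eq_verts, hverts₁, hverts₂, Set.disjoint_left]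
    exact fun v hv₁ hv₂ => hv₂.2 (hW.eq_base hv₁ hv₂.1)
  · rw [Subgraph.verts_sup, hverts₁, hverts₂, Set.eq_univ_iff_forall]
    intro v
    obtain hv | hv := hW.verts_union_verts.ge (Set.mem_univ v)
    · exact .inl hv
    · obtain rfl | hvx := eq_or_ne v x
      · exact .inl hW.base_mem_left
      · exact .inr ⟨hv, hvx⟩

end Combinatorics

section Signature

variable {M : MixedGraph V} {C₁ C₂ : M.graph.Subgraph} {x : V} [Finite V]

theorem oddCyclesSig_iff (hW : IsCycleWedge C₁ C₂ x) (h₁ : Even C₁.verts.ncard)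
    (h₂ : Odd C₂.verts.ncard) (P : ℕ → Prop) : OddCyclesSig M P ↔ CycleSig M C₂ P := by
  simp only [OddCyclesSig, ← and_imp, hW.isCycleSubgraph_and_odd_iff h₁ h₂, forall_eq]

theorem evenCyclesSig_iff (hW : IsCycleWedge C₁ C₂ x) (h₁ : Even C₁.verts.ncard)
    (h₂ : Odd C₂.verts.ncard) (P : ℕ → ℕ → Prop) :
    EvenCyclesSig M P ↔ CycleSig M C₁ (P C₁.verts.ncard) := by
  simp only [EvenCyclesSig, ← and_imp, hW.isCycleSubgraph_and_even_iff h₁ h₂, forall_eq]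

end Signature

section Kernel

variable [Fintype V] [DecidableEq V] {M : MixedGraph V} {x : V}

theorem hMatrix_eq_add {C₁ C₂ : M.graph.Subgraph} (hW : IsCycleWedge C₁ C₂ x) :
    M.hMatrix = M.subgraphMatrix C₁ + M.subgraphMatrix C₂ := by
  ext u v
  rw [Matrix.add_apply, M.subgraphMatrix_apply, M.subgraphMatrix_apply]
  by_cases h₁ : C₁.Adj u v
  · rw [if_pos h₁, if_neg (hW.not_adj_right h₁), add_zero]
  by_cases h₂ : C₂.Adj u v
  · rw [if_neg h₁, if_pos h₂, zero_add]
  · rw [if_neg h₁, if_neg h₂, add_zero, M.hMatrix_apply_eq_zero (by simp [hW.adj_iff, h₁, h₂])]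

variable {w₁ w₂ : M.graph.Walk x x} {h : V → ℂ}

theorem hMatrix_mulVec_eq_zero_iff (hW : IsCycleWedge w₁.toSubgraph w₂.toSubgraph x) :
    M.hMatrix *ᵥ h = 0 ↔ M.IsNullOffBase w₁ h ∧ M.IsNullOffBase w₂ h ∧
      (M.subgraphMatrix w₁.toSubgraph *ᵥ h) x + (M.subgraphMatrix w₂.toSubgraph *ᵥ h) x = 0 := by
  rw [hW.hMatrix_eq_add, Matrix.add_mulVec, funext_iff]
  have hsplit {v : V} (hv : v ≠ x) : (M.subgraphMatrix w₁.toSubgraph *ᵥ h) v = 0 ∨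
      (M.subgraphMatrix w₂.toSubgraph *ᵥ h) v = 0 := by
    by_cases h₁ : v ∈ w₁.toSubgraph.verts
    · exact .inr (M.subgraphMatrix_mulVec_apply_of_notMem h fun h₂ => hv (hW.eq_base h₁ h₂))
    · exact .inl (M.subgraphMatrix_mulVec_apply_of_notMem h h₁)
  constructor
  · intro hker
    refine ⟨fun v hv => ?_, fun v hv => ?_, hker x⟩
    · obtain h₁ | h₂ := hsplit hv
      · exact h₁
      · simpa [h₂] using hker v
    · obtain h₁ | h₂ := hsplit hv
      · simpa [h₁] using hker v
      · exact h₂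
  · rintro ⟨h₁, h₂, hx⟩ v
    obtain rfl | hv := eq_or_ne v x
    · exact hx
    · rw [Pi.add_apply, h₁ v hv, h₂ v hv, add_zero, Pi.zero_apply]

theorem exists_hMatrix_mulVec_eq_zero_iff (hW : IsCycleWedge w₁.toSubgraph w₂.toSubgraph x)
    (hw₁ : w₁.IsCycle) (hw₂ : w₂.IsCycle) (a b : ℂ) :
    (∃ h, M.hMatrix *ᵥ h = 0 ∧ h x = a ∧ M.transport w₁ h 1 = b) ↔
      alternate a b w₁.length = M.walkWeight w₁ w₁.length * a ∧
      ∃ c, alternate a c w₂.length = M.walkWeight w₂ w₂.length * a ∧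
        b + (M.walkWeight w₁ w₁.length)⁻¹ * alternate a b (w₁.length - 1) +
          (c + (M.walkWeight w₂ w₂.length)⁻¹ * alternate a c (w₂.length - 1)) = 0 := by
  constructor
  · rintro ⟨h, hker, rfl, rfl⟩
    obtain ⟨h₁, h₂, hx⟩ := hW.hMatrix_mulVec_eq_zero_iff.1 hker
    rw [h₁.mulVec_base hw₁, h₂.mulVec_base hw₂] at hx
    exact ⟨h₁.alternate_length hw₁, M.transport w₂ h 1, h₂.alternate_length hw₂, hx⟩
  · rintro ⟨hlen₁, c, hlen₂, hx⟩
    obtain ⟨h₁, hnull₁, ha₁, hb⟩ := MixedGraph.exists_isNullOffBase hw₁ hlen₁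
    obtain ⟨h₂, hnull₂, ha₂, hc⟩ := MixedGraph.exists_isNullOffBase hw₂ hlen₂
    let h (v : V) : ℂ := if v ∈ w₁.toSubgraph.verts then h₁ v else h₂ v
    have heq₁ (v : V) (hv : v ∈ w₁.toSubgraph.verts) : h v = h₁ v := if_pos hv
    have heq₂ (v : V) (hv : v ∈ w₂.toSubgraph.verts) : h v = h₂ v := by
      by_cases hv₁ : v ∈ w₁.toSubgraph.verts
      · rw [heq₁ v hv₁, hW.eq_base hv₁ hv, ha₁, ha₂]
      · exact if_neg hv₁
    have hmul₁ := M.subgraphMatrix_mulVec_congr heq₁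
    have hmul₂ := M.subgraphMatrix_mulVec_congr heq₂
    refine ⟨h, hW.hMatrix_mulVec_eq_zero_iff.2 ⟨?_, ?_, ?_⟩, ?_, ?_⟩
    · rwa [MixedGraph.IsNullOffBase, hmul₁]
    · rwa [MixedGraph.IsNullOffBase, hmul₂]
    · rwa [hmul₁, hmul₂, hnull₁.mulVec_base hw₁, hnull₂.mulVec_base hw₂, ha₁, ha₂, hb, hc]
    · rw [heq₁ x hW.base_mem_left, ha₁]
    · rw [MixedGraph.transport, heq₁ _ (w₁.mem_verts_toSubgraph.2 (w₁.getVert_mem_support 1)), ← hb,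
        MixedGraph.transport]

theorem eq_zero_of_hMatrix_mulVec_eq_zero {l : ℕ}
    (hW : IsCycleWedge w₁.toSubgraph w₂.toSubgraph x)
    (hw₁ : w₁.IsCycle) (hw₂ : w₂.IsCycle) (hl : w₂.length = 2 * l + 1)
    (hker : M.hMatrix *ᵥ h = 0) (hx : h x = 0) (hsnd : M.transport w₁ h 1 = 0) : h = 0 := by
  obtain ⟨h₁, h₂, -⟩ := hW.hMatrix_mulVec_eq_zero_iff.1 hker
  have hsnd₂ : M.transport w₂ h 1 = 0 := by
    have := h₂.alternate_length hw₂
    rw [hl, alternate_two_mul_add_one, hx, mul_zero] at this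
    exact (mul_eq_zero.1 this).resolve_left (pow_ne_zero l (neg_ne_zero.2 one_ne_zero))
  funext v
  obtain hv | hv := hW.verts_union_verts.ge (Set.mem_univ v)
  · exact h₁.apply_eq_zero hw₁ hx hsnd (w₁.mem_verts_toSubgraph.1 hv)
  · exact h₂.apply_eq_zero hw₂ hx hsnd₂ (w₂.mem_verts_toSubgraph.1 hv)

theorem hRank_add_two_eq_card_iff {m l : ℕ} (hW : IsCycleWedge w₁.toSubgraph w₂.toSubgraph x)
    (hw₁ : w₁.IsCycle) (hw₂ : w₂.IsCycle) (hm : w₁.length = 2 * m) (hl : w₂.length = 2 * l + 1) :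
    M.hRank + 2 = Fintype.card V ↔
      M.walkWeight w₁ w₁.length = (-1) ^ m ∧
        M.walkWeight w₂ w₂.length + (M.walkWeight w₂ w₂.length)⁻¹ = 0 := by
  let e : (V → ℂ) →ₗ[ℂ] ℂ × ℂ :=
    (LinearMap.proj x).prod (M.walkWeight w₁ 1 • LinearMap.proj (w₁.getVert 1))
  have he (h : V → ℂ) : e h = (h x, M.transport w₁ h 1) := rfl
  have hfinrank : Module.finrank ℂ (ℂ × ℂ) = 2 := by simp
  have hm0 : m ≠ 0 := by have := hw₁.three_le_length; omega
  rw [MixedGraph.hRank, ← hfinrank, rank_add_finrank_eq_card_iff M.hMatrix e fun h hker heq =>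
    hW.eq_zero_of_hMatrix_mulVec_eq_zero hw₁ hw₂ hl hker (congrArg Prod.fst heq)
      (congrArg Prod.snd heq), ← forall_exists_alternate_iff hm0 l]
  simp only [he, Prod.forall, Prod.mk.injEq, hW.exists_hMatrix_mulVec_eq_zero_iff hw₁ hw₂]
  rw [hm, hl, Nat.add_sub_cancel]

theorem hRank_add_two_eq_card_iff_walkSignature (hW : IsCycleWedge w₁.toSubgraph w₂.toSubgraph x)
    (hw₁ : w₁.IsCycle) (hw₂ : w₂.IsCycle) (heven : Even w₁.length) (hodd : Odd w₂.length) :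
    M.hRank + 2 = Fintype.card V ↔
      Odd (walkSignature M w₂) ∧ walkSignature M w₁ % 4 = w₁.length % 4 := by
  obtain ⟨m, hm⟩ := heven.exists_two_nsmul
  obtain ⟨l, hl⟩ := hodd
  rw [smul_eq_mul] at hm
  rw [hW.hRank_add_two_eq_card_iff hw₁ hw₂ hm hl, M.walkWeight_length, M.walkWeight_length,
    I_zpow_eq_neg_one_pow_iff, I_zpow_add_inv_eq_zero_iff, ← hm, and_comm]
  rfl

theorem hRank_add_two_eq_card_iff_cycleSig {C₁ C₂ : M.graph.Subgraph} (hW : IsCycleWedge C₁ C₂ x)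
    (h₁ : Even C₁.verts.ncard) (h₂ : Odd C₂.verts.ncard) :
    M.hRank + 2 = Fintype.card V ↔
      CycleSig M C₂ Odd ∧ CycleSig M C₁ (fun s => s % 4 = C₁.verts.ncard % 4) := by
  rw [cycleSig_iff_exists_walk_at M hW.base_mem_left,
    cycleSig_iff_exists_walk_at M hW.base_mem_right]
  have hrank {w₁ w₂ : M.graph.Walk x x} (hw₁ : w₁.IsCycle) (hw₂ : w₂.IsCycle)
      (hC₁ : w₁.toSubgraph = C₁) (hC₂ : w₂.toSubgraph = C₂) :
      M.hRank + 2 = Fintype.card V ↔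
        Odd (walkSignature M w₂) ∧ walkSignature M w₁ % 4 = C₁.verts.ncard % 4 := by
    subst hC₁ hC₂
    rw [ncard_verts_toSubgraph hw₁] at h₁ ⊢
    rw [ncard_verts_toSubgraph hw₂] at h₂
    exact hW.hRank_add_two_eq_card_iff_walkSignature hw₁ hw₂ h₁ h₂
  constructor
  · intro hcard
    obtain ⟨w₁, hw₁, hC₁⟩ := hW.left.exists_isCycle_toSubgraph_eq hW.base_mem_left
    obtain ⟨w₂, hw₂, hC₂⟩ := hW.right.exists_isCycle_toSubgraph_eq hW.base_mem_right
    obtain ⟨hodd, hmod⟩ := (hrank hw₁ hw₂ hC₁ hC₂).1 hcard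
    exact ⟨⟨w₂, hw₂, hC₂, hodd⟩, w₁, hw₁, hC₁, hmod⟩
  · rintro ⟨⟨w₂, hw₂, hC₂, hodd⟩, w₁, hw₁, hC₁, hmod⟩
    exact (hrank hw₁ hw₂ hC₁ hC₂).2 ⟨hodd, hmod⟩

end Kernel

end IsCycleWedge

/-- Let G̃ be a mixed bicyclic graph with underlying graph
∞(p,1,q), p even, q odd. Then r(G̃) = 2m(G) − 2κ(G) iff the odd cycle of G̃ has odd
signature and the even cycle C̃_p satisfies σ(C̃_p) ≡ p (mod 4). -/
theorem infinity_hRank_eq_lower_bound_iff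
    {V : Type u} [Fintype V] [DecidableEq V] (M : MixedGraph V) (p q : ℕ)
    (hp : Even p) (hq : Odd q) (hG : IsInfinityGraph M.graph p q) :
    (M.hRank : ℤ) =
        2 * (matchingNumber M.graph : ℤ) - 2 * (evenCycleCount M.graph : ℤ) ↔
      (OddCyclesSig M Odd ∧ EvenCyclesSig M (fun n s => s % 4 = n % 4)) := by
  obtain ⟨C₁, C₂, x, hW, rfl, rfl⟩ := hG.exists_isCycleWedge
  obtain ⟨N, hN⟩ := hW.exists_isPerfectMatching hp hq
  have hcard : 2 * matchingNumber M.graph = Fintype.card V := by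
    rw [two_mul_matchingNumber_of_isPerfectMatching hN, Nat.card_eq_fintype_card]
  rw [hW.oddCyclesSig_iff hp hq, hW.evenCyclesSig_iff hp hq,
    ← hW.hRank_add_two_eq_card_iff_cycleSig hp hq, hW.evenCycleCount_eq_one hp hq, ← hcard]
  omega

end MixedPaper
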